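/- Let ν be a σ-invariant Gibbs measure for a d-Hölder continuous φ : Σ_A → ℝ with pressure P = 0 (i.e. ν is the unique equilibrium measure of φ). Then ∫_{Σ_A} φ dν < 0, and, setting h := −∫_{Σ_A} φ dν (which equals the measure-theoretic entropy h_ν(σ) by the variational principle), for every x ∈ Σ_A^* ∪ {∅} one has lim_{r→∞} (1/r) ∫_{[x]} card{ k ∈ ℕ_0 : 0 ≤ −S_kφ(ω) ≤ r } dν(ω) = ν([x]) / h. -/

import Mathlib

open MeasureTheory Filter
open scoped ENNReal NNReal

namespace SFT

variable {l : ℕ}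

/-- The one-sided subshift of finite type determined by the `l × l` matrix `A`:
infinite sequences with transitions allowed by `A`. -/
abbrev SigmaA (l : ℕ) (A : Matrix (Fin l) (Fin l) ℕ) : Type :=
  {ω : ℕ → Fin l // ∀ k, A (ω k) (ω (k + 1)) = 1}

/-- The left shift `σ` on `SigmaA l A`. -/
def shift {A : Matrix (Fin l) (Fin l) ℕ} (ω : SigmaA l A) : SigmaA l A :=
  ⟨fun n => ω.1 (n + 1), fun k => ω.2 (k + 1)⟩

/-- Birkhoff sums `S_k φ = ∑_{m<k} φ ∘ σ^m`. -/
def birkhoff {A : Matrix (Fin l) (Fin l) ℕ} (φ : SigmaA l A → ℝ) (k : ℕ) (ω : SigmaA l A) : ℝ :=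
  ∑ m ∈ Finset.range k, φ (shift^[m] ω)

/-- The matrix `A` has `0`-`1` entries and is irreducible and aperiodic
(some power of `A` has all entries strictly positive). -/
def Primitive (A : Matrix (Fin l) (Fin l) ℕ) : Prop :=
  (∀ i j, A i j = 0 ∨ A i j = 1) ∧ ∃ n : ℕ, 0 < n ∧ ∀ i j, 0 < (A ^ n) i j

/-- A finite word is admissible, i.e. belongs to `Σ_A^*`. -/
def Admissible (A : Matrix (Fin l) (Fin l) ℕ) (x : List (Fin l)) : Prop :=
  x ≠ [] ∧ ∀ (i : ℕ) (h : i + 1 < x.length), A (x[i]'(by omega)) (x[i + 1]'h) = 1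

/-- The cylinder set `[x]` of a finite word (the empty word gives all of `Σ_A`). -/
def cylinder (A : Matrix (Fin l) (Fin l) ℕ) (x : List (Fin l)) : Set (SigmaA l A) :=
  {ω | ∀ (i : ℕ) (h : i < x.length), ω.1 i = x[i]'h}

/-- The initial word `(ω_1, …, ω_k)` of `ω`. -/
def wordPrefix {A : Matrix (Fin l) (Fin l) ℕ} (ω : SigmaA l A) (k : ℕ) : List (Fin l) :=
  List.ofFn (fun i : Fin k => ω.1 i)

/-- `μ` is a Gibbs measure for the potential `φ` with pressure `P`:
`c⁻¹ ≤ μ([ω_1,…,ω_k]) / exp(S_kφ(ω) − kP) ≤ c` for some `c > 1`. -/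
def IsGibbs {A : Matrix (Fin l) (Fin l) ℕ} (φ : SigmaA l A → ℝ) (P : ℝ)
    (μ : Measure (SigmaA l A)) : Prop :=
  ∃ c : ℝ, 1 < c ∧ ∀ (ω : SigmaA l A) (k : ℕ), 0 < k →
    c⁻¹ ≤ (μ (cylinder A (wordPrefix ω k))).toReal / Real.exp (birkhoff φ k ω - k * P) ∧
      (μ (cylinder A (wordPrefix ω k))).toReal / Real.exp (birkhoff φ k ω - k * P) ≤ c

/-- `φ` is Hölder continuous with respect to the metric `d(ω,υ) = 2^{-(ω ∧ υ)}`: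
there are `C` and an exponent `s > 0` with `|φ(ω) − φ(υ)| ≤ C ⬝ d(ω,υ)^s`, i.e.
`|φ(ω) − φ(υ)| ≤ C ⬝ 2^{-sn}` whenever `ω` and `υ` agree in their first `n` coordinates. -/
def HolderCont {A : Matrix (Fin l) (Fin l) ℕ} (φ : SigmaA l A → ℝ) : Prop :=
  ∃ C s : ℝ, 0 < s ∧ ∀ (ω υ : SigmaA l A) (n : ℕ),
    (∀ i < n, ω.1 i = υ.1 i) → |φ ω - φ υ| ≤ C * (2 : ℝ) ^ (-(s * n))

/-!
Since `A` is primitive, the Gibbs bounds make `ν` quasi-independent at a fixed gap `N`: for some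
`κ > 0`, `ν (C ∩ σ^{-(n+N)} B) ≥ κ ν(C) ν(B)` for every cylinder `C` of length `n` and every Borel
set `B`. This gives ergodicity. Taking for `B` a one-letter cylinder that `C` avoids at the right
time, it also shows that the measures of cylinders decay exponentially, so that, again by the Gibbs
bounds, `-S_k φ ≥ δ k - C` with `δ > 0`; integrating, `h ≥ δ > 0`.

By the mean ergodic theorem, `-S_k φ / k → h` in measure. The counting integral divided by `r` is
the Riemann sum `(1/r) ∑ₖ ν (B ∩ {0 ≤ -S_k φ ≤ r})`, that is, the integral over `t ≥ 0` of the
summand at `k = ⌊r t⌋`, which tends to `ν(B)` for `t < 1/h` and to `0` for `t > 1/h`. The linear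
growth of `-S_k φ` confines these integrands to a bounded interval, and dominated convergence gives
`ν(B) / h`.
-/

open Set Topology

section Analysis

theorem le_add_sub_mul_of_antitone {u : ℕ → ℝ} (hu : Antitone u) {M : ℕ} (hM : 0 < M) {η : ℝ}
    (hη : 0 ≤ η) (hstep : ∀ n, u (n + M) ≤ u n - η) (n : ℕ) : u n ≤ u 0 + η - η / M * n := by
  have hmul (q : ℕ) : u (q * M) ≤ u 0 - q * η := by
    induction q with
    | zero => simp
    | succ q ih =>
      rw [Nat.succ_mul]
      push_cast
      linarith [hstep (q * M)]
  have hn : (n : ℝ) ≤ M * ((n / M : ℕ) + 1) := by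
    exact_mod_cast (Nat.lt_mul_div_succ n hM).le
  have hquot : η / M * n ≤ ((n / M : ℕ) + 1) * η := by
    rw [div_mul_eq_mul_div, div_le_iff₀ (by positivity)]
    nlinarith
  linarith [hu (Nat.div_mul_le_self n M), hmul (n / M)]

theorem norm_birkhoffSum_le {α E : Type*} [SeminormedAddCommGroup E] (f : α → α) {g : α → E}
    {D : ℝ} (hg : ∀ x, ‖g x‖ ≤ D) (n : ℕ) (x : α) : ‖birkhoffSum f g n x‖ ≤ n * D :=
  (norm_sum_le_of_le (Finset.range n) fun m _ => hg (f^[m] x)).trans_eq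
    (by rw [Finset.sum_const, Finset.card_range, nsmul_eq_mul])

theorem map_natFloor_mul_volume {r : ℝ} (hr : 0 < r) :
    (volume.restrict (Ici 0)).map (fun t : ℝ => ⌊r * t⌋₊) = ENNReal.ofReal r⁻¹ • Measure.count := by
  refine Measure.ext_of_singleton fun k => ?_
  have hpre : (fun t : ℝ => ⌊r * t⌋₊) ⁻¹' {k} ∩ Ici 0 = Ico (k / r) ((k + 1) / r) := by
    ext t
    have hfloor (ht : 0 ≤ t) := Nat.floor_eq_iff (n := k) (mul_nonneg hr.le ht)
    simp only [mem_inter_iff, mem_preimage, mem_singleton_iff, mem_Ici, mem_Ico, div_le_iff₀' hr,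
      lt_div_iff₀' hr]
    refine ⟨fun ⟨hk, ht⟩ => (hfloor ht).1 hk, fun hk => ?_⟩
    have ht : 0 ≤ t := nonneg_of_mul_nonneg_right (k.cast_nonneg.trans hk.1) hr
    exact ⟨(hfloor ht).2 hk, ht⟩
  have hmeas : Measurable fun t : ℝ => ⌊r * t⌋₊ := by fun_prop
  rw [Measure.map_apply hmeas (measurableSet_singleton k),
    Measure.restrict_apply (hmeas (measurableSet_singleton k)), hpre, Real.volume_Ico]
  simp only [Measure.smul_apply, Measure.count_singleton, smul_eq_mul, mul_one]
  congr 1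
  ring

theorem setIntegral_Ici_comp_natFloor_mul {r : ℝ} (hr : 0 < r) {f : ℕ → ℝ} (hf : Summable f) :
    ∫ t in Ici 0, f ⌊r * t⌋₊ = (∑' k, f k) / r := by
  have hint : Integrable f Measure.count := integrable_count_iff.2 hf.norm
  rw [← integral_map (φ := fun t : ℝ => ⌊r * t⌋₊) (by fun_prop)
    measurable_from_nat.aestronglyMeasurable, map_natFloor_mul_volume hr, integral_smul_measure,
    integral_countable hint, ENNReal.toReal_ofReal (by positivity), smul_eq_mul,
    div_eq_inv_mul]
  simp

theorem summable_of_eq_zero_of_lt {f : ℕ → ℝ} {R : ℝ} (hf : ∀ k : ℕ, R < k → f k = 0) :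
    Summable f :=
  summable_of_hasFiniteSupport ((finite_Iic ⌊R⌋₊).subset fun k hk =>
    Nat.le_floor (le_of_not_gt fun h => hk (hf k h)))

theorem tendsto_tsum_div_of_ae_tendsto_natFloor {a : ℝ → ℕ → ℝ} {F : ℝ → ℝ} {c T : ℝ}
    (hc : ∀ r k, |a r k| ≤ c) (hT : ∀ r ≥ 1, ∀ k : ℕ, r * T < k → a r k = 0)
    (hF : ∀ᵐ t, 0 ≤ t → Tendsto (fun r => a r ⌊r * t⌋₊) atTop (𝓝 (F t))) :
    Tendsto (fun r => (∑' k, a r k) / r) atTop (𝓝 (∫ t in Ici 0, F t)) := by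
  have hsum : ∀ᶠ r in atTop, ∫ t in Ici 0, a r ⌊r * t⌋₊ = (∑' k, a r k) / r := by
    filter_upwards [eventually_ge_atTop 1] with r hr
    exact setIntegral_Ici_comp_natFloor_mul (by linarith) (summable_of_eq_zero_of_lt (hT r hr))
  refine Tendsto.congr' hsum (tendsto_integral_filter_of_dominated_convergence
    ((Iic (T + 1)).indicator fun _ => c) ?_ ?_ ?_ ?_)
  · exact .of_forall fun r => ((measurable_from_nat (f := a r)).comp
      (by fun_prop : Measurable fun t : ℝ => ⌊r * t⌋₊)).aestronglyMeasurable
  · filter_upwards [eventually_ge_atTop 1] with r hr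
    refine .of_forall fun t => ?_
    by_cases ht : t ≤ T + 1
    · simpa [ht] using hc r _
    · have : r * T < ⌊r * t⌋₊ := by nlinarith [Nat.lt_floor_add_one (r * t)]
      simp [ht, hT r hr _ this]
  · rw [integrable_indicator_iff measurableSet_Iic, IntegrableOn, Measure.restrict_restrict
      measurableSet_Iic, Iic_inter_Ici]
    exact integrable_const _
  · exact (ae_restrict_iff' measurableSet_Ici).2 hF

end Analysis

section Renewal

variable {α ι : Type*} [MeasurableSpace α] {μ : Measure α}

theorem integral_ncard_setOf_mem [IsFiniteMeasure μ] [Countable ι] {s : ι → Set α}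
    (hs : ∀ i, MeasurableSet (s i)) (hsum : Summable fun i => μ.real (s i)) :
    ∫ ω, (({i | ω ∈ s i}.ncard : ℕ) : ℝ) ∂μ = ∑' i, μ.real (s i) := by
  have hncard (ω : α) : (({i | ω ∈ s i}.ncard : ℕ) : ℝ) = ∑' i, (s i).indicator 1 ω := by
    rw [← Nat.card_coe_set_eq, ← nsmul_one, ← tsum_const,
      tsum_subtype {i | ω ∈ s i} fun _ => (1 : ℝ)]
    rfl
  have hint (i : ι) : ∫ ω, (s i).indicator (1 : α → ℝ) ω ∂μ = μ.real (s i) :=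
    integral_indicator_one (hs i)
  simp_rw [hncard, ← hint]
  refine (integral_tsum_of_summable_integral_norm (fun i => ?_) ?_).symm
  · exact (integrable_indicator_iff (hs i)).2 (integrable_const (1 : ℝ)).integrableOn
  · simpa only [norm_indicator_eq_indicator_norm, Pi.one_apply, norm_one, ← Pi.one_def, hint]
      using hsum

theorem tendstoInMeasure_mono_measure {E : Type*} [EDist E] {ρ : Measure α} {X : ι → α → E}
    {f : Filter ι} {Y : α → E} (hX : TendstoInMeasure μ X f Y) (hρ : ρ ≤ μ) :
    TendstoInMeasure ρ X f Y := fun ε hε =>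
  tendsto_of_tendsto_of_tendsto_of_le_of_le tendsto_const_nhds (hX ε hε) (fun _ => zero_le)
    fun _ => hρ _

theorem tendsto_measure_notMem_of_tendstoInMeasure {E : Type*} [PseudoMetricSpace E]
    {X : ι → α → E} {f : Filter ι} {c : E} {U : Set E}
    (hX : TendstoInMeasure μ X f fun _ => c) (hU : U ∈ 𝓝 c) :
    Tendsto (fun i => μ {ω | X i ω ∉ U}) f (𝓝 0) := by
  obtain ⟨ε, hε, hball⟩ := Metric.mem_nhds_iff.1 hU
  refine tendsto_of_tendsto_of_tendsto_of_le_of_le tendsto_const_nhds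
    (tendstoInMeasure_iff_dist.1 hX ε hε) (fun _ => zero_le) fun i => measure_mono fun ω hω => ?_
  exact le_of_not_gt fun h => hω (hball (Metric.mem_ball.2 h))

theorem tendsto_measure_div_notMem {X : ℕ → α → ℝ} {h t : ℝ} (ht : 0 < t) {U : Set ℝ}
    (hX : TendstoInMeasure μ (fun (k : ℕ) ω => (k : ℝ)⁻¹ * X k ω) atTop fun _ => h)
    (hU : U ∈ 𝓝 (t * h)) :
    Tendsto (fun r : ℝ => μ {ω | X ⌊r * t⌋₊ ω / r ∉ U}) atTop (𝓝 0) := by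
  obtain ⟨V, hV, W, hW, hVW⟩ := mem_nhds_prod_iff.1 (continuous_mul.continuousAt (x := (t, h)) hU)
  have hratio : Tendsto (fun r : ℝ => (⌊r * t⌋₊ : ℝ) / r) atTop (𝓝 t) := by
    simpa only [mul_comm] using tendsto_nat_floor_mul_div_atTop ht.le
  have hfloor : Tendsto (fun r : ℝ => ⌊r * t⌋₊) atTop atTop :=
    tendsto_nat_floor_atTop.comp (tendsto_id.atTop_mul_const ht)
  refine tendsto_of_tendsto_of_tendsto_of_le_of_le' tendsto_const_nhds
    ((tendsto_measure_notMem_of_tendstoInMeasure hX hW).comp hfloor)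
    (.of_forall fun _ => zero_le) ?_
  filter_upwards [hratio.eventually_mem hV, hfloor.eventually_gt_atTop 0] with r hr hpos
  refine measure_mono fun ω hω hmem => hω ?_
  have hprod : (⌊r * t⌋₊ : ℝ) / r * ((⌊r * t⌋₊ : ℝ)⁻¹ * X ⌊r * t⌋₊ ω) = X ⌊r * t⌋₊ ω / r := by
    field_simp
  exact hprod ▸ hVW (mk_mem_prod hr hmem)

theorem tendsto_measureReal_mem_Icc_of_mul_lt_one [IsFiniteMeasure μ] {X : ℕ → α → ℝ} {h t : ℝ}
    (ht : 0 < t) (hh : 0 < h) (hth : t * h < 1)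
    (hX : TendstoInMeasure μ (fun (k : ℕ) ω => (k : ℝ)⁻¹ * X k ω) atTop fun _ => h) :
    Tendsto (fun r : ℝ => μ.real {ω | X ⌊r * t⌋₊ ω ∈ Icc 0 r}) atTop (𝓝 (μ.real univ)) := by
  have hbad : Tendsto (fun r : ℝ => μ.real {ω | X ⌊r * t⌋₊ ω / r ∉ Ioo 0 1}) atTop (𝓝 0) :=
    (ENNReal.tendsto_toReal ENNReal.zero_ne_top).comp
      (tendsto_measure_div_notMem ht hX (Ioo_mem_nhds (mul_pos ht hh) hth))
  refine tendsto_of_tendsto_of_tendsto_of_le_of_le'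
    (by simpa only [sub_zero] using hbad.const_sub (μ.real univ)) tendsto_const_nhds ?_
    (.of_forall fun r => measureReal_mono (subset_univ _))
  filter_upwards [eventually_gt_atTop 0] with r hr
  have hcover : univ ⊆ {ω | X ⌊r * t⌋₊ ω ∈ Icc 0 r} ∪ {ω | X ⌊r * t⌋₊ ω / r ∉ Ioo 0 1} := by
    refine fun ω _ => or_iff_not_imp_right.2 fun hω => ?_
    obtain ⟨hpos, hlt⟩ := of_not_not hω
    exact ⟨((div_pos_iff_of_pos_right hr).1 hpos).le, ((div_lt_one hr).1 hlt).le⟩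
  exact sub_le_iff_le_add.2 ((measureReal_mono hcover).trans (measureReal_union_le _ _))

theorem tendsto_measureReal_mem_Icc_of_one_lt_mul [IsFiniteMeasure μ] {X : ℕ → α → ℝ} {h t : ℝ}
    (ht : 0 < t) (hth : 1 < t * h)
    (hX : TendstoInMeasure μ (fun (k : ℕ) ω => (k : ℝ)⁻¹ * X k ω) atTop fun _ => h) :
    Tendsto (fun r : ℝ => μ.real {ω | X ⌊r * t⌋₊ ω ∈ Icc 0 r}) atTop (𝓝 0) := by
  have hbad : Tendsto (fun r : ℝ => μ.real {ω | X ⌊r * t⌋₊ ω / r ∉ Ioi 1}) atTop (𝓝 0) :=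
    (ENNReal.tendsto_toReal ENNReal.zero_ne_top).comp
      (tendsto_measure_div_notMem ht hX (Ioi_mem_nhds hth))
  refine tendsto_of_tendsto_of_tendsto_of_le_of_le' tendsto_const_nhds hbad
    (.of_forall fun _ => measureReal_nonneg) ?_
  filter_upwards [eventually_gt_atTop 0] with r hr
  exact measureReal_mono fun ω hω => not_lt.2 ((div_le_one hr).2 hω.2)

/-- The integral is `∑ k, μ {X k ∈ [0, r]}`, a Riemann sum in the variable `t = k / r`; as
`X ⌊r t⌋ / r → t h` in measure, its integrand converges to `μ univ` for `t < 1 / h` and to `0` for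
`t > 1 / h`. -/
theorem tendsto_integral_ncard_div [IsFiniteMeasure μ] {X : ℕ → α → ℝ}
    (hXm : ∀ k, Measurable (X k)) {h : ℝ} (hh : 0 < h)
    (hX : TendstoInMeasure μ (fun (k : ℕ) ω => (k : ℝ)⁻¹ * X k ω) atTop fun _ => h)
    {δ C : ℝ} (hδ : 0 < δ) (hgrowth : ∀ k ω, δ * k - C ≤ X k ω) :
    Tendsto (fun r : ℝ => (∫ ω, (({k | X k ω ∈ Icc 0 r}.ncard : ℕ) : ℝ) ∂μ) / r) atTop
      (𝓝 (μ.real univ / h)) := by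
  set p : ℝ → ℕ → ℝ := fun r k => μ.real {ω | X k ω ∈ Icc 0 r}
  have hp_zero : ∀ r ≥ 1, ∀ k : ℕ, r * ((1 + |C|) / δ) < k → p r k = 0 := by
    intro r hr k hk
    rw [← mul_div_assoc, div_lt_iff₀ hδ] at hk
    refine (congrArg μ.real (eq_empty_of_forall_notMem fun ω hω => ?_)).trans measureReal_empty
    nlinarith [hgrowth k ω, hω.2, le_abs_self C, abs_nonneg C]
  have hlim : ∀ᵐ t, 0 ≤ t → Tendsto (fun r => p r ⌊r * t⌋₊) atTop
      (𝓝 ((Iio h⁻¹).indicator (fun _ => μ.real univ) t)) := by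
    filter_upwards [Measure.ae_ne volume 0, Measure.ae_ne volume h⁻¹] with t ht0 hth ht
    have ht : 0 < t := lt_of_le_of_ne ht ht0.symm
    rcases hth.lt_or_gt with hlt | hgt
    · rw [indicator_of_mem (mem_Iio.2 hlt)]
      exact tendsto_measureReal_mem_Icc_of_mul_lt_one ht hh (by rwa [← lt_div_iff₀ hh, one_div]) hX
    · rw [indicator_of_notMem (notMem_Iio.2 hgt.le)]
      exact tendsto_measureReal_mem_Icc_of_one_lt_mul ht (by rwa [← div_lt_iff₀ hh, one_div]) hX
  have hvalue : ∫ t in Ici 0, (Iio h⁻¹).indicator (fun _ => μ.real univ) t = μ.real univ / h := by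
    rw [integral_indicator measurableSet_Iio, Measure.restrict_restrict measurableSet_Iio,
      Iio_inter_Ici, setIntegral_const, Real.volume_real_Ico_of_le (by positivity), smul_eq_mul]
    ring
  rw [← hvalue]
  refine (tendsto_tsum_div_of_ae_tendsto_natFloor (c := μ.real univ) ?_ hp_zero hlim).congr' ?_
  · exact fun r k => (abs_of_nonneg measureReal_nonneg).trans_le (measureReal_mono (subset_univ _))
  filter_upwards [eventually_ge_atTop 1] with r hr
  exact congrArg (· / r) (integral_ncard_setOf_mem (fun k => hXm k measurableSet_Icc)
    (summable_of_eq_zero_of_lt (hp_zero r hr))).symm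

end Renewal

section MeanErgodic

variable {α E : Type*} [MeasurableSpace α] {μ : Measure α} {f : α → α}

theorem coeFn_birkhoffAverage_compMeasurePreserving [NormedAddCommGroup E] [NormedSpace ℝ E]
    {p : ℝ≥0∞} (hf : MeasurePreserving f μ μ) {g : α → E} (hg : MemLp g p μ) (n : ℕ) :
    (birkhoffAverage ℝ (Lp.compMeasurePreserving f hf) id n (hg.toLp g) : Lp E p μ) =ᵐ[μ]
      birkhoffAverage ℝ f g n := by
  have hiter (m : ℕ) :
      ((Lp.compMeasurePreserving f hf)^[m] (hg.toLp g) : Lp E p μ) =ᵐ[μ] g ∘ f^[m] := by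
    rw [Lp.compMeasurePreserving_iterate hf m]
    exact (Lp.coeFn_compMeasurePreserving _ _).trans
      ((hf.iterate m).quasiMeasurePreserving.ae_eq_comp hg.coeFn_toLp)
  filter_upwards [Lp.coeFn_smul (n : ℝ)⁻¹
      (∑ m ∈ Finset.range n, (Lp.compMeasurePreserving f hf)^[m] (hg.toLp g)),
    Lp.coeFn_finsetSum (Finset.range n) fun m => (Lp.compMeasurePreserving f hf)^[m] (hg.toLp g),
    ae_all_iff.2 hiter] with x hsmul hsum hx
  simp only [birkhoffAverage, birkhoffSum, id_eq, hsmul, Pi.smul_apply, hsum, Finset.sum_apply, hx,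
    Function.comp_apply]

theorem ae_eq_integral_of_compMeasurePreserving_eq [IsProbabilityMeasure μ] {p : ℝ≥0∞}
    (hf : Ergodic f μ) {u : Lp ℝ p μ}
    (hu : Lp.compMeasurePreserving f hf.toMeasurePreserving u = u) :
    u =ᵐ[μ] fun _ => ∫ x, u x ∂μ := by
  have hcomp : u =ᵐ[μ] u ∘ f := by
    simpa only [hu] using Lp.coeFn_compMeasurePreserving u hf.toMeasurePreserving
  obtain ⟨c, hc⟩ := hf.ae_eq_const_of_ae_eq_comp_ae (Lp.aestronglyMeasurable u) hcomp.symm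
  have hint : ∫ x, u x ∂μ = c := by
    simpa using integral_congr_ae hc
  exact hint ▸ hc

/-- By ergodicity the fixed vectors of the Koopman operator on `L²` are the constants, so the limit
in von Neumann's mean ergodic theorem is the projection onto the constants. -/
theorem tendstoInMeasure_birkhoffAverage [IsProbabilityMeasure μ] (hf : Ergodic f μ) {g : α → ℝ}
    (hg : MemLp g 2 μ) :
    TendstoInMeasure μ (birkhoffAverage ℝ f g) atTop fun _ => ∫ x, g x ∂μ := by
  have hmp := hf.toMeasurePreserving
  let U : Lp ℝ 2 μ →L[ℝ] Lp ℝ 2 μ := (Lp.compMeasurePreservingₗᵢ ℝ f hmp).toContinuousLinearMap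
  let u := (U.eqLocus (1 : Lp ℝ 2 μ →L[ℝ] Lp ℝ 2 μ)).orthogonalProjectionOnto (hg.toLp g)
  have hu : (u : Lp ℝ 2 μ) =ᵐ[μ] fun _ => ∫ x, g x ∂μ := by
    let e : Lp ℝ 2 μ := indicatorConstLp 2 .univ (measure_ne_top μ univ) 1
    have he : e ∈ U.eqLocus (1 : Lp ℝ 2 μ →L[ℝ] Lp ℝ 2 μ) :=
      Lp.indicatorConstLp_compMeasurePreserving .univ (measure_ne_top μ univ) 1 hmp
    have hproj : inner ℝ e (u : Lp ℝ 2 μ) = inner ℝ e (hg.toLp g) :=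
      Submodule.inner_orthogonalProjectionOnto_eq_of_mem_left ⟨e, he⟩ (hg.toLp g)
    rw [L2.inner_indicatorConstLp_one, L2.inner_indicatorConstLp_one, setIntegral_univ,
      setIntegral_univ, integral_congr_ae hg.coeFn_toLp] at hproj
    exact hproj ▸ ae_eq_integral_of_compMeasurePreserving_eq hf u.2
  have hlim := U.tendsto_birkhoffAverage_orthogonalProjection
    (LinearIsometry.norm_toContinuousLinearMap_le _) (hg.toLp g)
  exact (tendstoInMeasure_of_tendsto_Lp hlim).congr
    (coeFn_birkhoffAverage_compMeasurePreserving hmp hg) hu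

theorem integrable_birkhoffSum [NormedAddCommGroup E] (hf : MeasurePreserving f μ μ) {g : α → E}
    (hg : Integrable g μ) (n : ℕ) : Integrable (birkhoffSum f g n) μ :=
  integrable_finsetSum _ fun m _ => (hf.iterate m).integrable_comp_of_integrable hg

theorem integral_birkhoffSum [NormedAddCommGroup E] [NormedSpace ℝ E]
    (hf : MeasurePreserving f μ μ) {g : α → E} (hg : Integrable g μ) (n : ℕ) :
    ∫ x, birkhoffSum f g n x ∂μ = n • ∫ x, g x ∂μ := by
  have hiter (m : ℕ) : ∫ x, g (f^[m] x) ∂μ = ∫ x, g x ∂μ := by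
    have hm := hf.iterate m
    have haesm := hm.map_eq.symm ▸ hg.aestronglyMeasurable
    rw [← integral_map hm.measurable.aemeasurable haesm, hm.map_eq]
  refine (integral_finsetSum (Finset.range n) (f := fun m x => g (f^[m] x)) fun m _ =>
    (hf.iterate m).integrable_comp_of_integrable hg).trans ?_
  simp only [hiter, Finset.sum_const, Finset.card_range]

theorem le_integral_of_le_birkhoffSum [IsProbabilityMeasure μ] (hf : MeasurePreserving f μ μ)
    {g : α → ℝ} (hg : Integrable g μ) {δ C : ℝ} (hgrowth : ∀ n x, δ * n - C ≤ birkhoffSum f g n x) :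
    δ ≤ ∫ x, g x ∂μ := by
  have hbound (n : ℕ) : n * (δ - ∫ x, g x ∂μ) ≤ C := by
    have hmono := integral_mono (integrable_const _) (integrable_birkhoffSum hf hg n) (hgrowth n)
    rw [integral_const, probReal_univ, one_smul, integral_birkhoffSum hf hg, nsmul_eq_mul] at hmono
    linarith
  by_contra! hlt
  obtain ⟨n, hn⟩ := exists_nat_gt (C / (δ - ∫ x, g x ∂μ))
  exact (hbound n).not_gt ((div_lt_iff₀ (sub_pos.2 hlt)).1 hn)

end MeanErgodic

section Subshift

variable {A : Matrix (Fin l) (Fin l) ℕ}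

theorem shift_iterate_apply (n : ℕ) (ω : SigmaA l A) (k : ℕ) :
    (shift^[n] ω).1 k = ω.1 (k + n) := by
  induction n generalizing ω with
  | zero => rfl
  | succ _ ih => exact ih (shift ω)

theorem mem_cylinder_wordPrefix {ω υ : SigmaA l A} {n : ℕ} :
    υ ∈ cylinder A (wordPrefix ω n) ↔ ∀ i < n, υ.1 i = ω.1 i := by
  simp [cylinder, wordPrefix]

theorem cylinder_wordPrefix_congr {ω υ : SigmaA l A} {n : ℕ} (h : ∀ i < n, ω.1 i = υ.1 i) :
    cylinder A (wordPrefix ω n) = cylinder A (wordPrefix υ n) := by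
  ext τ
  simp only [mem_cylinder_wordPrefix]
  exact forall₂_congr fun i hi => by rw [h i hi]

theorem birkhoff_eq_birkhoffSum (φ : SigmaA l A → ℝ) : birkhoff φ = birkhoffSum shift φ := rfl

theorem cylinder_wordPrefix_zero (ω : SigmaA l A) : cylinder A (wordPrefix ω 0) = univ :=
  eq_univ_of_forall fun _ => mem_cylinder_wordPrefix.2 fun _ hi => absurd hi (Nat.not_lt_zero _)

theorem cylinder_wordPrefix_add (ω : SigmaA l A) (m n : ℕ) :
    cylinder A (wordPrefix ω (m + n)) =
      cylinder A (wordPrefix ω m) ∩ shift^[m] ⁻¹' cylinder A (wordPrefix (shift^[m] ω) n) := by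
  ext υ
  simp only [mem_inter_iff, mem_preimage, mem_cylinder_wordPrefix, shift_iterate_apply]
  refine ⟨fun h => ⟨fun i hi => h i (by lia), fun i hi => h (i + m) (by lia)⟩, fun h i hi => ?_⟩
  rcases lt_or_ge i m with him | him
  · exact h.1 i him
  · simpa only [Nat.sub_add_cancel him] using h.2 (i - m) (by lia)

theorem cylinder_wordPrefix_one (ω : SigmaA l A) :
    cylinder A (wordPrefix ω 1) = {υ | υ.1 0 = ω.1 0} := by
  ext υ
  simp only [mem_cylinder_wordPrefix, Nat.lt_one_iff, forall_eq, mem_ofPred_eq]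

theorem antitone_cylinder_wordPrefix (ω : SigmaA l A) :
    Antitone fun n => cylinder A (wordPrefix ω n) :=
  fun _ _ hmn _ hυ => mem_cylinder_wordPrefix.2 fun i hi =>
    mem_cylinder_wordPrefix.1 hυ i (hi.trans_le hmn)

/-- The point `i ρ₀ ρ₁ …` of the subshift, for an allowed transition from `i` to `ρ₀`. -/
def cons (i : Fin l) (ρ : SigmaA l A) (h : A i (ρ.1 0) = 1) : SigmaA l A :=
  ⟨fun k => Nat.casesOn k i ρ.1, fun k => Nat.casesOn k h ρ.2⟩

theorem exists_shift_iterate_eq_of_pow_pos (h01 : ∀ i j, A i j = 0 ∨ A i j = 1) {n : ℕ} {i : Fin l}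
    {ρ : SigmaA l A} (h : 0 < (A ^ n) i (ρ.1 0)) :
    ∃ τ : SigmaA l A, τ.1 0 = i ∧ shift^[n] τ = ρ := by
  induction n generalizing i with
  | zero =>
    refine ⟨ρ, ?_, rfl⟩
    by_contra hne
    exact h.ne' (Matrix.one_apply_ne' hne)
  | succ n ih =>
    rw [pow_succ', Matrix.mul_apply] at h
    obtain ⟨m, -, hm⟩ := Finset.exists_ne_zero_of_sum_ne_zero h.ne'
    obtain ⟨him, hmρ⟩ := mul_ne_zero_iff.1 hm
    obtain ⟨τ, rfl, hτ⟩ := ih (Nat.pos_of_ne_zero hmρ)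
    exact ⟨cons i τ ((h01 _ _).resolve_left him), rfl, hτ⟩

theorem exists_mem_cylinder_shift_iterate_eq {ω ρ : SigmaA l A} {n : ℕ} (h : ρ.1 0 = ω.1 n) :
    ∃ τ ∈ cylinder A (wordPrefix ω n), shift^[n] τ = ρ := by
  induction n generalizing ω with
  | zero => exact ⟨ρ, cylinder_wordPrefix_zero ω ▸ mem_univ ρ, rfl⟩
  | succ n ih =>
    obtain ⟨τ, hτω, hτ⟩ := ih (ω := shift ω) h
    have hτ0 : τ.1 0 = ω.1 1 := by
      cases n with
      | zero => exact (show τ = ρ from hτ) ▸ h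
      | succ n => exact mem_cylinder_wordPrefix.1 hτω 0 n.succ_pos
    refine ⟨cons (ω.1 0) τ (hτ0 ▸ ω.2 0), mem_cylinder_wordPrefix.2 fun i hi => ?_, hτ⟩
    cases i with
    | zero => rfl
    | succ i => exact mem_cylinder_wordPrefix.1 hτω i (Nat.lt_of_succ_lt_succ hi)

theorem Primitive.exists_shift_iterate_eq (hA : Primitive A) :
    ∃ N, ∀ (i : Fin l) (υ : SigmaA l A), ∃ ρ : SigmaA l A, ρ.1 0 = i ∧ shift^[N] ρ = υ := by
  obtain ⟨h01, N, -, hpos⟩ := hA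
  exact ⟨N, fun i υ => exists_shift_iterate_eq_of_pow_pos h01 (hpos i _)⟩

theorem Primitive.exists_mem_cylinder_shift_iterate_eq (hA : Primitive A) :
    ∃ N, ∀ (ω υ : SigmaA l A) (n : ℕ), ∃ τ ∈ cylinder A (wordPrefix ω n), shift^[n + N] τ = υ := by
  obtain ⟨N, hN⟩ := hA.exists_shift_iterate_eq
  refine ⟨N, fun ω υ n => ?_⟩
  obtain ⟨ρ, hρω, hρ⟩ := hN (ω.1 n) υ
  obtain ⟨τ, hτω, hτ⟩ := SFT.exists_mem_cylinder_shift_iterate_eq hρω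
  exact ⟨τ, hτω, by rw [add_comm, Function.iterate_add_apply, hτ, hρ]⟩

theorem continuous_shift : Continuous (shift : SigmaA l A → SigmaA l A) :=
  continuous_induced_rng.2
    (continuous_pi fun n => (continuous_apply (n + 1)).comp continuous_subtype_val)

theorem isOpen_cylinder_wordPrefix (ω : SigmaA l A) (n : ℕ) :
    IsOpen (cylinder A (wordPrefix ω n)) := by
  have hpre : cylinder A (wordPrefix ω n) = Subtype.val ⁻¹' PiNat.cylinder ω.1 n :=
    Set.ext fun _ => mem_cylinder_wordPrefix
  rw [hpre]
  exact (PiNat.isOpen_cylinder _ _ _).preimage continuous_subtype_val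

theorem exists_cylinder_wordPrefix_subset {U : Set (SigmaA l A)} (hU : IsOpen U) {ω : SigmaA l A}
    (hω : ω ∈ U) : ∃ n, cylinder A (wordPrefix ω n) ⊆ U := by
  obtain ⟨V, hV, rfl⟩ := isOpen_induced_iff.1 hU
  obtain ⟨_, ⟨υ, n, rfl⟩, hωυ, hsub⟩ :=
    (PiNat.isTopologicalBasis_cylinders fun _ : ℕ => Fin l).exists_subset_of_mem_open hω hV
  rw [← PiNat.mem_cylinder_iff_eq.1 hωυ] at hsub
  exact ⟨n, fun τ hτ => hsub (mem_cylinder_wordPrefix.1 hτ)⟩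

theorem measurableSet_cylinder_wordPrefix (ω : SigmaA l A) (n : ℕ) :
    MeasurableSet (cylinder A (wordPrefix ω n)) :=
  (isOpen_cylinder_wordPrefix ω n).measurableSet

theorem exists_abs_log_measureReal_cylinder_one_le (ν : Measure (SigmaA l A)) :
    ∃ D, ∀ ω : SigmaA l A, |Real.log (ν.real (cylinder A (wordPrefix ω 1)))| ≤ D := by
  refine ⟨∑ i, |Real.log (ν.real {υ : SigmaA l A | υ.1 0 = i})|, fun ω => ?_⟩
  rw [cylinder_wordPrefix_one]
  exact Finset.single_le_sum (f := fun i => |Real.log (ν.real {υ : SigmaA l A | υ.1 0 = i})|)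
    (fun _ _ => abs_nonneg _) (Finset.mem_univ (ω.1 0))

section Comparison

variable {μ ρ : Measure (SigmaA l A)}

theorem measure_preimage_le_of_cylinder_le
    (h : ∀ (ω : SigmaA l A) n, μ (cylinder A (wordPrefix ω n)) ≤ ρ (cylinder A (wordPrefix ω n)))
    {n : ℕ} (S : Set (Fin n → Fin l)) :
    μ ((fun ω (i : Fin n) => ω.1 i) ⁻¹' S) ≤ ρ ((fun ω (i : Fin n) => ω.1 i) ⁻¹' S) := by
  classical
  let π : SigmaA l A → Fin n → Fin l := fun ω i => ω.1 i
  have hπ (ω : SigmaA l A) : π ⁻¹' {π ω} = cylinder A (wordPrefix ω n) := by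
    ext υ
    simp only [π, mem_preimage, mem_singleton_iff, funext_iff, Fin.forall_iff,
      mem_cylinder_wordPrefix]
  have hπm : Measurable π :=
    measurable_pi_lambda _ fun i => (measurable_pi_apply _).comp measurable_subtype_coe
  have hsum (m : Measure (SigmaA l A)) : ∑ y ∈ S.toFinset, m (π ⁻¹' {y}) = m (π ⁻¹' S) := by
    rw [sum_measure_preimage_singleton _ fun y _ => hπm (measurableSet_singleton y), coe_toFinset]
  rw [← hsum, ← hsum]
  refine Finset.sum_le_sum fun y _ => ?_
  rcases (π ⁻¹' {y}).eq_empty_or_nonempty with hempty | ⟨ω, rfl⟩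
  · simp only [hempty, measure_empty, le_refl]
  · simpa only [hπ] using h ω n

theorem measure_isOpen_le_of_cylinder_le
    (h : ∀ (ω : SigmaA l A) n, μ (cylinder A (wordPrefix ω n)) ≤ ρ (cylinder A (wordPrefix ω n)))
    {U : Set (SigmaA l A)} (hU : IsOpen U) : μ U ≤ ρ U := by
  let V (n : ℕ) : Set (SigmaA l A) := {ω | cylinder A (wordPrefix ω n) ⊆ U}
  have hV : Monotone V := fun m n hmn ω hω => (antitone_cylinder_wordPrefix ω hmn).trans hω
  have hUV : U = ⋃ n, V n := by
    ext ω
    refine ⟨fun hω => mem_iUnion.2 (exists_cylinder_wordPrefix_subset hU hω), fun hω => ?_⟩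
    obtain ⟨n, hn⟩ := mem_iUnion.1 hω
    exact hn (mem_cylinder_wordPrefix.2 fun _ _ => rfl)
  have hle (n : ℕ) : μ (V n) ≤ ρ (V n) := by
    let π : SigmaA l A → Fin n → Fin l := fun ω i => ω.1 i
    have hVn : π ⁻¹' (π '' V n) = V n := by
      refine (subset_preimage_image π (V n)).antisymm' fun ω ⟨υ, hυ, hυω⟩ => ?_
      have hcyl := cylinder_wordPrefix_congr fun i hi => congrFun hυω ⟨i, hi⟩
      exact hcyl.symm.trans_subset hυ
    exact hVn ▸ measure_preimage_le_of_cylinder_le h (π '' V n)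
  rw [hUV]
  exact le_of_tendsto_of_tendsto' (tendsto_measure_iUnion_atTop hV)
    (tendsto_measure_iUnion_atTop hV) hle

theorem measure_le_of_cylinder_le [IsFiniteMeasure ρ]
    (h : ∀ (ω : SigmaA l A) n, μ (cylinder A (wordPrefix ω n)) ≤ ρ (cylinder A (wordPrefix ω n))) :
    μ ≤ ρ := by
  have : TopologicalSpace.MetrizableSpace (SigmaA l A) :=
    have := TopologicalSpace.metrizableSpace_of_t3_secondCountable (ℕ → Fin l)
    IsEmbedding.subtypeVal.metrizableSpace
  intro B
  rw [B.measure_eq_iInf_isOpen ρ]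
  exact le_iInf₂ fun U hBU => le_iInf fun hU =>
    (measure_mono hBU).trans (measure_isOpen_le_of_cylinder_le h hU)

theorem mul_measureReal_le_of_cylinder_le [IsFiniteMeasure μ] [IsFiniteMeasure ρ] {c : ℝ}
    (hc : 0 ≤ c) (h : ∀ (ω : SigmaA l A) n,
      c * μ.real (cylinder A (wordPrefix ω n)) ≤ ρ.real (cylinder A (wordPrefix ω n)))
    (B : Set (SigmaA l A)) : c * μ.real B ≤ ρ.real B := by
  have hsmul (S : Set (SigmaA l A)) : (ENNReal.ofReal c • μ).real S = c * μ.real S := by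
    rw [measureReal_ennreal_smul_apply, ENNReal.toReal_ofReal hc]
  have := μ.smul_finite (c := ENNReal.ofReal c) ENNReal.ofReal_ne_top
  have hle : ENNReal.ofReal c • μ ≤ ρ := measure_le_of_cylinder_le fun ω n =>
    (ENNReal.toReal_le_toReal (measure_ne_top _ _) (measure_ne_top _ _)).1
      ((hsmul _).trans_le (h ω n))
  exact hsmul B ▸ ENNReal.toReal_mono (measure_ne_top ρ B) (hle B)

end Comparison

end Subshift

section Gibbs

variable {A : Matrix (Fin l) (Fin l) ℕ} {φ : SigmaA l A → ℝ} {P : ℝ} {ν : Measure (SigmaA l A)}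
  [IsProbabilityMeasure ν]

theorem IsGibbs.exists_abs_log_sub_le (h : IsGibbs φ P ν) :
    ∃ K, ∀ (ω : SigmaA l A) (k : ℕ), 0 < ν.real (cylinder A (wordPrefix ω k)) ∧
      |Real.log (ν.real (cylinder A (wordPrefix ω k))) - (birkhoff φ k ω - k * P)| ≤ K := by
  obtain ⟨c, hc, hbounds⟩ := h
  have hc0 : 0 < c := one_pos.trans hc
  refine ⟨Real.log c, fun ω k => ?_⟩
  rcases k.eq_zero_or_pos with rfl | hk
  · simp [cylinder_wordPrefix_zero, birkhoff, Real.log_nonneg hc.le]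
  obtain ⟨hlower, hupper⟩ := hbounds ω k hk
  rw [← measureReal_def] at hlower hupper
  set s := birkhoff φ k ω - k * P
  have hratio := (inv_pos.2 hc0).trans_le hlower
  have hpos : 0 < ν.real (cylinder A (wordPrefix ω k)) :=
    (div_pos_iff_of_pos_right (Real.exp_pos s)).1 hratio
  have hlog : Real.log (ν.real (cylinder A (wordPrefix ω k)) / Real.exp s) =
      Real.log (ν.real (cylinder A (wordPrefix ω k))) - s := by
    rw [Real.log_div hpos.ne' (Real.exp_ne_zero s), Real.log_exp]
  rw [← hlog, abs_le, ← Real.log_inv]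
  exact ⟨hpos, Real.log_le_log (inv_pos.2 hc0) hlower, Real.log_le_log hratio hupper⟩

theorem IsGibbs.exists_norm_le (h : IsGibbs φ P ν) : ∃ D, ∀ ω, ‖φ ω‖ ≤ D := by
  obtain ⟨K, hK⟩ := h.exists_abs_log_sub_le
  obtain ⟨D, hD⟩ := exists_abs_log_measureReal_cylinder_one_le ν
  refine ⟨D + K + |P|, fun ω => ?_⟩
  obtain ⟨-, hω⟩ := hK ω 1
  have hbirkhoff : birkhoff φ 1 ω = φ ω := Finset.sum_range_one _
  rw [hbirkhoff, Nat.cast_one, one_mul, abs_le] at hω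
  have hDω := abs_le.1 (hD ω)
  rw [Real.norm_eq_abs, abs_le]
  constructor <;> linarith [neg_abs_le P, le_abs_self P]

theorem IsGibbs.exists_mul_le_measureReal_inter_cylinder (h : IsGibbs φ P ν) (hA : Primitive A) :
    ∃ κ > 0, ∃ N, ∀ (ω υ : SigmaA l A) (n k : ℕ),
      κ * ν.real (cylinder A (wordPrefix ω n)) * ν.real (cylinder A (wordPrefix υ k)) ≤
        ν.real (cylinder A (wordPrefix ω n) ∩ shift^[n + N] ⁻¹' cylinder A (wordPrefix υ k)) := by
  obtain ⟨K, hK⟩ := h.exists_abs_log_sub_le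
  obtain ⟨D, hD⟩ := h.exists_norm_le
  obtain ⟨N, hN⟩ := hA.exists_mem_cylinder_shift_iterate_eq
  refine ⟨Real.exp (-(3 * K + N * (D + P))), Real.exp_pos _, N, fun ω υ n k => ?_⟩
  obtain ⟨τ, hτω, hτυ⟩ := hN ω υ n
  rw [← cylinder_wordPrefix_congr (mem_cylinder_wordPrefix.1 hτω), ← hτυ]
  have hsub : cylinder A (wordPrefix τ (n + N + k)) ⊆ cylinder A (wordPrefix τ n) ∩
      shift^[n + N] ⁻¹' cylinder A (wordPrefix (shift^[n + N] τ) k) := by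
    rw [cylinder_wordPrefix_add]
    exact inter_subset_inter_left _ (antitone_cylinder_wordPrefix τ (Nat.le_add_right n N))
  refine le_trans ?_ (measureReal_mono hsub)
  obtain ⟨hpos_n, hlog_n⟩ := hK τ n
  obtain ⟨hpos_k, hlog_k⟩ := hK (shift^[n + N] τ) k
  obtain ⟨hpos, hlog⟩ := hK τ (n + N + k)
  have hsum : birkhoff φ (n + N + k) τ =
      birkhoff φ n τ + birkhoff φ N (shift^[n] τ) + birkhoff φ k (shift^[n + N] τ) := by
    simp only [birkhoff_eq_birkhoffSum, birkhoffSum_add]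
  have hgap : -(N * D) ≤ birkhoff φ N (shift^[n] τ) :=
    (abs_le.1 (norm_birkhoffSum_le shift hD N _)).1
  rw [← Real.exp_log hpos_n, ← Real.exp_log hpos_k, ← Real.exp_log hpos, ← Real.exp_add,
    ← Real.exp_add, Real.exp_le_exp]
  rw [hsum] at hlog
  push_cast at hlog
  linarith [(abs_le.1 hlog).1, (abs_le.1 hlog_n).2, (abs_le.1 hlog_k).2]

theorem IsGibbs.exists_mul_le_measureReal_inter (h : IsGibbs φ P ν) (hA : Primitive A) :
    ∃ κ > 0, ∃ N, ∀ (ω : SigmaA l A) (n : ℕ) (B : Set (SigmaA l A)), MeasurableSet B →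
      κ * ν.real (cylinder A (wordPrefix ω n)) * ν.real B ≤
        ν.real (cylinder A (wordPrefix ω n) ∩ shift^[n + N] ⁻¹' B) := by
  obtain ⟨κ, hκ, N, hN⟩ := h.exists_mul_le_measureReal_inter_cylinder hA
  refine ⟨κ, hκ, N, fun ω n B hB => ?_⟩
  have hshift : Measurable (shift^[n + N] : SigmaA l A → SigmaA l A) :=
    (continuous_shift.iterate _).measurable
  have hmap {S : Set (SigmaA l A)} (hS : MeasurableSet S) :
      ((ν.restrict (cylinder A (wordPrefix ω n))).map shift^[n + N]).real S =
        ν.real (cylinder A (wordPrefix ω n) ∩ shift^[n + N] ⁻¹' S) := by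
    rw [map_measureReal_apply hshift hS, measureReal_restrict_apply (hshift hS), inter_comm]
  rw [← hmap hB]
  refine mul_measureReal_le_of_cylinder_le (by positivity) (fun υ k => ?_) B
  rw [hmap (measurableSet_cylinder_wordPrefix υ k)]
  exact hN ω υ n k

theorem IsGibbs.ergodic (h : IsGibbs φ P ν) (hA : Primitive A)
    (hν : MeasurePreserving shift ν ν) : Ergodic shift ν := by
  obtain ⟨κ, hκ, N, hN⟩ := h.exists_mul_le_measureReal_inter hA
  refine ⟨hν, ⟨fun B hB hinv => ?_⟩⟩
  have hle : κ * ν.real B * ν.real Bᶜ ≤ (ν.restrict B).real Bᶜ := by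
    refine mul_measureReal_le_of_cylinder_le (by positivity) (fun ω n => ?_) Bᶜ
    rw [measureReal_restrict_apply (measurableSet_cylinder_wordPrefix ω n), mul_right_comm]
    simpa only [preimage_iterate_eq, Function.iterate_fixed hinv] using hN ω n B hB
  rw [measureReal_restrict_apply hB.compl, compl_inter_self, measureReal_empty] at hle
  have hzero : ν.real B = 0 ∨ ν.real Bᶜ = 0 := by
    by_contra! hne
    have hB_pos := measureReal_nonneg.lt_of_ne' hne.1
    have hBc_pos := measureReal_nonneg.lt_of_ne' hne.2
    exact hle.not_gt (by positivity)
  refine eventuallyConst_set'.2 (hzero.imp (fun hB0 => ?_) fun hBc0 => ?_)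
  · exact ae_eq_empty.2 ((measureReal_eq_zero_iff).1 hB0)
  · exact ae_eq_univ.2 ((measureReal_eq_zero_iff).1 hBc0)

theorem IsGibbs.exists_measureReal_cylinder_add_le (h : IsGibbs φ P ν) (hA : Primitive A)
    (hl : 2 ≤ l) : ∃ η > 0, ∃ M > 0, ∀ (ω : SigmaA l A) (n : ℕ),
      ν.real (cylinder A (wordPrefix ω (n + M))) ≤
        Real.exp (-η) * ν.real (cylinder A (wordPrefix ω n)) := by
  obtain ⟨κ, hκ, N, hN⟩ := h.exists_mul_le_measureReal_inter hA
  obtain ⟨K, hK⟩ := h.exists_abs_log_sub_le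
  obtain ⟨D, hD⟩ := exists_abs_log_measureReal_cylinder_one_le ν
  obtain ⟨_, hstart⟩ := hA.exists_shift_iterate_eq
  refine ⟨κ * Real.exp (-D), by positivity, N + 1, N.succ_pos, fun ω n => ?_⟩
  have := Fin.nontrivial_iff_two_le.2 hl
  obtain ⟨j, hj⟩ := exists_ne (ω.1 (n + N))
  obtain ⟨υ, rfl, -⟩ := hstart j ω
  have hυ : Real.exp (-D) ≤ ν.real (cylinder A (wordPrefix υ 1)) :=
    (Real.le_log_iff_exp_le (hK υ 1).1).1 (abs_le.1 (hD υ)).1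
  set C := cylinder A (wordPrefix ω n)
  set B := cylinder A (wordPrefix υ 1)
  have hB : MeasurableSet B := measurableSet_cylinder_wordPrefix υ 1
  have hmix := hN ω n B hB
  have hdisj : Disjoint (cylinder A (wordPrefix ω (n + (N + 1)))) (C ∩ shift^[n + N] ⁻¹' B) := by
    refine disjoint_left.2 fun τ hτω hτυ => hj ?_
    have hτ_eq := mem_cylinder_wordPrefix.1 hτω (n + N) (by lia)
    have hτ_next := mem_cylinder_wordPrefix.1 hτυ.2 0 one_pos
    rw [shift_iterate_apply, zero_add, hτ_eq] at hτ_next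
    exact hτ_next.symm
  have hmeas : MeasurableSet (C ∩ shift^[n + N] ⁻¹' B) :=
    (measurableSet_cylinder_wordPrefix ω n).inter ((continuous_shift.iterate _).measurable hB)
  have hsum : ν.real (cylinder A (wordPrefix ω (n + (N + 1)))) +
      ν.real (C ∩ shift^[n + N] ⁻¹' B) ≤ ν.real C := by
    rw [← measureReal_union hdisj hmeas]
    exact measureReal_mono (union_subset (antitone_cylinder_wordPrefix ω (Nat.le_add_right _ _))
      inter_subset_left)
  calc ν.real (cylinder A (wordPrefix ω (n + (N + 1))))
      ≤ ν.real C - κ * ν.real C * ν.real B := by linarith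
    _ ≤ ν.real C - κ * ν.real C * Real.exp (-D) := by gcongr
    _ = (-(κ * Real.exp (-D)) + 1) * ν.real C := by ring
    _ ≤ Real.exp (-(κ * Real.exp (-D))) * ν.real C := by
      gcongr
      exact Real.add_one_le_exp _

theorem IsGibbs.exists_le_sub_birkhoff (h : IsGibbs φ P ν) (hA : Primitive A) (hl : 2 ≤ l) :
    ∃ δ > 0, ∃ C, ∀ (k : ℕ) (ω : SigmaA l A), δ * k - C ≤ k * P - birkhoff φ k ω := by
  obtain ⟨K, hK⟩ := h.exists_abs_log_sub_le
  obtain ⟨η, hη, M, hM, hcontr⟩ := h.exists_measureReal_cylinder_add_le hA hl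
  refine ⟨η / M, by positivity, η + K, fun k ω => ?_⟩
  let u (n : ℕ) : ℝ := Real.log (ν.real (cylinder A (wordPrefix ω n)))
  have hu : Antitone u := fun m n hmn =>
    Real.log_le_log (hK ω n).1 (measureReal_mono (antitone_cylinder_wordPrefix ω hmn))
  have hstep (n : ℕ) : u (n + M) ≤ u n - η := by
    have hlog := Real.log_le_log (hK ω (n + M)).1 (hcontr ω n)
    rw [Real.log_mul (Real.exp_ne_zero _) (hK ω n).1.ne', Real.log_exp] at hlog
    linarith
  have hu0 : u 0 = 0 := by
    simp only [u, cylinder_wordPrefix_zero, probReal_univ, Real.log_one]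
  have hlin : u k ≤ u 0 + η - η / M * k := le_add_sub_mul_of_antitone hu hM hη.le hstep k
  linarith [(abs_le.1 (hK ω k).2).1]

end Gibbs

section Counting

variable {A : Matrix (Fin l) (Fin l) ℕ} {φ : SigmaA l A → ℝ}

theorem HolderCont.continuous (hφ : HolderCont φ) : Continuous φ := by
  obtain ⟨C, s, hs, h⟩ := hφ
  have hlim : Tendsto (fun n : ℕ => C * (2 : ℝ) ^ (-(s * n))) atTop (𝓝 0) := by
    have hlt : (2 : ℝ) ^ (-s) < 1 := Real.rpow_lt_one_of_one_lt_of_neg one_lt_two (neg_lt_zero.2 hs)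
    have hpow := (tendsto_pow_atTop_nhds_zero_of_lt_one (by positivity) hlt).const_mul C
    rw [mul_zero] at hpow
    refine hpow.congr fun n => ?_
    rw [← Real.rpow_natCast, ← Real.rpow_mul zero_le_two, neg_mul]
  refine Metric.continuous_iff'.2 fun ω ε hε => ?_
  obtain ⟨n, hn⟩ := (hlim.eventually_lt_const hε).exists
  filter_upwards [(isOpen_cylinder_wordPrefix ω n).mem_nhds
    (mem_cylinder_wordPrefix.2 fun _ _ => rfl)] with υ hυ
  exact (h υ ω n (mem_cylinder_wordPrefix.1 hυ)).trans_lt hn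

theorem renewal_counting_tendsto_general (hl : 2 ≤ l) (hA : Primitive A) (hφ : Measurable φ)
    {ν : Measure (SigmaA l A)} [IsProbabilityMeasure ν] (hGibbs : IsGibbs φ 0 ν)
    (hν : MeasurePreserving shift ν ν) :
    ∫ ω, φ ω ∂ν < 0 ∧ ∀ B : Set (SigmaA l A),
      Tendsto
        (fun r : ℝ =>
          (∫ ω in B,
            ((Set.ncard {k : ℕ | 0 ≤ -birkhoff φ k ω ∧ -birkhoff φ k ω ≤ r} : ℕ) : ℝ) ∂ν) / r)
        atTop (𝓝 (ν.real B / -∫ ω, φ ω ∂ν)) := by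
  obtain ⟨δ, hδ, C, hgrowth⟩ := hGibbs.exists_le_sub_birkhoff hA hl
  obtain ⟨D, hD⟩ := hGibbs.exists_norm_le
  simp only [mul_zero, zero_sub] at hgrowth
  have hLp : MemLp (-φ) 2 ν := (MemLp.of_bound hφ.aestronglyMeasurable D (.of_forall hD)).neg
  have hneg (k : ℕ) (ω : SigmaA l A) : birkhoffSum shift (-φ) k ω = -birkhoff φ k ω :=
    birkhoffSum_neg shift φ k ω
  have hmean : TendstoInMeasure ν (fun (k : ℕ) ω => (k : ℝ)⁻¹ * -birkhoff φ k ω) atTop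
      fun _ => -∫ ω, φ ω ∂ν := by
    rw [← integral_neg]
    exact (tendstoInMeasure_birkhoffAverage (hGibbs.ergodic hA hν) hLp).congr_left fun k =>
      .of_forall fun ω => congrArg ((k : ℝ)⁻¹ * ·) (hneg k ω)
  have hh : δ ≤ -∫ ω, φ ω ∂ν := by
    rw [← integral_neg]
    exact le_integral_of_le_birkhoffSum hν (hLp.integrable one_le_two)
      fun k ω => (hgrowth k ω).trans_eq (hneg k ω).symm
  have hmeas (k : ℕ) : Measurable fun ω => -birkhoff φ k ω :=
    (Finset.measurable_fun_sum _ fun m _ => hφ.comp (continuous_shift.iterate m).measurable).neg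
  refine ⟨by linarith, fun B => ?_⟩
  simpa only [mem_Icc, measureReal_restrict_apply_univ] using tendsto_integral_ncard_div hmeas
    (hδ.trans_le hh) (tendstoInMeasure_mono_measure hmean Measure.restrict_le_self) hδ hgrowth

end Counting

/-- For a `σ`-invariant Gibbs measure `ν` with zero pressure,
`∫ φ dν < 0` and, with `h := −∫ φ dν` (the entropy of `ν`), for every
`x ∈ Σ_A^* ∪ {∅}`,
`(1/r) ∫_{[x]} card{k ∈ ℕ₀ : 0 ≤ −S_kφ(ω) ≤ r} dν(ω) → ν([x])/h` as `r → ∞`. -/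
theorem renewal_counting_tendsto
    (hl : 2 ≤ l) (A : Matrix (Fin l) (Fin l) ℕ) (hA : Primitive A)
    (φ : SigmaA l A → ℝ) (hφ : HolderCont φ)
    (ν : Measure (SigmaA l A)) [IsProbabilityMeasure ν] (hGibbs : IsGibbs φ 0 ν)
    (hinv : ∀ B : Set (SigmaA l A), MeasurableSet B → ν (shift ⁻¹' B) = ν B) :
    (∫ ω, φ ω ∂ν) < 0 ∧
      ∀ x : List (Fin l), x = [] ∨ Admissible A x →
        Tendsto
          (fun r : ℝ =>
            (∫ ω in cylinder A x,
              ((Set.ncard {k : ℕ | 0 ≤ -birkhoff φ k ω ∧ -birkhoff φ k ω ≤ r} : ℕ) : ℝ) ∂ν) / r)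
          atTop (nhds ((ν (cylinder A x)).toReal / (-(∫ ω, φ ω ∂ν)))) := by
  have hν : MeasurePreserving (shift : SigmaA l A → SigmaA l A) ν ν :=
    ⟨continuous_shift.measurable, Measure.ext fun B hB => by
      rw [Measure.map_apply continuous_shift.measurable hB, hinv B hB]⟩
  obtain ⟨hneg, hlim⟩ :=
    renewal_counting_tendsto_general hl hA hφ.continuous.measurable hGibbs hν
  exact ⟨hneg, fun x _ => hlim (cylinder A x)⟩

end SFT
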